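/- For h = 5 there exists a group isomorphism u : ℤ/8 ⊕ (ℤ/2)⁴ → ℤ⁵/A₅ℤ⁵ such that for all a, b with integer lifts x = (x₁,…,x₅) and y = (y₁,…,y₅): ∂λ(u(a),u(b)) = 5x₁y₁/8 + (x₁y₃ + x₃y₁ + x₁y₅ + x₅y₁ + x₂y₃ + x₃y₂ + x₂y₅ + x₅y₂ + x₄y₅ + x₅y₄)/2 mod ℤ and ∂θ(u(a)) = 5x₁²/16 + (x₄² + x₅² + x₁x₃ + x₁x₅ + x₂x₃ + x₂x₅ + x₄x₅)/2 mod ℤ. -/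

import Mathlib

open Matrix

noncomputable section

/-- The matrix `Q_h`: first row all `4`; in rows `2,…,h` diagonal and
above-diagonal entries are `2`, below-diagonal entries are `0`. -/
def Qmat (h : ℕ) : Matrix (Fin h) (Fin h) ℤ :=
  Matrix.of fun i j => if (i : ℕ) = 0 then 4 else if i ≤ j then 2 else 0

/-- `A_h = Q_h + Q_hᵀ`. -/
def Amat (h : ℕ) : Matrix (Fin h) (Fin h) ℤ := Qmat h + (Qmat h)ᵀ

/-- `A_h` viewed as a rational matrix. -/
def AmatQ (h : ℕ) : Matrix (Fin h) (Fin h) ℚ := (Amat h).map (Int.cast)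

/-- `Q_h` viewed as a rational matrix. -/
def QmatQ (h : ℕ) : Matrix (Fin h) (Fin h) ℚ := (Qmat h).map (Int.cast)

/-- The cokernel `ℤ^h / A_h ℤ^h`. -/
abbrev Coker (h : ℕ) := (Fin h → ℤ) ⧸ LinearMap.range ((Amat h).mulVecLin)

/-- The quotient map `ℤ^h → ℤ^h / A_h ℤ^h`. -/
def ckMk {h : ℕ} (x : Fin h → ℤ) : Coker h := Submodule.Quotient.mk x

def ratVec {h : ℕ} (x : Fin h → ℤ) : Fin h → ℚ := fun i => (x i : ℚ)

/-- The boundary linking form `∂λ` computed on representatives: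
`x ᵀ A_h⁻¹ y mod ℤ`, valued in `ℚ/ℤ`. -/
def linkR (h : ℕ) (x y : Fin h → ℤ) : AddCircle (1 : ℚ) :=
  ((ratVec x ⬝ᵥ ((AmatQ h)⁻¹ *ᵥ ratVec y) : ℚ) : AddCircle (1 : ℚ))

/-- The boundary quadratic form `∂θ` computed on representatives:
`xᵀ A_h⁻¹ Q_h A_h⁻¹ x mod ℤ`, valued in `ℚ/ℤ`. -/
def quadR (h : ℕ) (x : Fin h → ℤ) : AddCircle (1 : ℚ) :=
  ((ratVec x ⬝ᵥ (((AmatQ h)⁻¹ * QmatQ h * (AmatQ h)⁻¹) *ᵥ ratVec x) : ℚ) : AddCircle (1 : ℚ))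

/-!
Since `A = Q + Qᵀ`, the quadratic form is half the linking form before reduction modulo `ℤ`:
`xᵀA⁻¹QA⁻¹x = ½ xᵀA⁻¹x`. As `zᵀAz = 2 zᵀQz` is even, both forms descend to the cokernel of `A`.

It then suffices to find unimodular integer matrices `B`, `T` with `B D = A T` for
`D = diag(8, 2, 2, 2, 2)`, so that `x ↦ B x` induces `ℤ/8 ⊕ (ℤ/2)⁴ ≃ ℤ⁵/A₅ℤ⁵`, and such that
`Bᵀ A₅⁻¹ B` differs from the rational Gram matrix `N` of the target forms by an even symmetric
integer matrix `W + Wᵀ`; such a difference changes neither `xᵀNy` nor `½ xᵀNx` modulo `ℤ`.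
-/

section LinearAlgebra

variable {n R : Type*} [Fintype n] [CommRing R]

theorem dotProduct_add_transpose_mulVec_self (Q : Matrix n n R) (x : n → R) :
    x ⬝ᵥ ((Q + Qᵀ) *ᵥ x) = 2 * (x ⬝ᵥ (Q *ᵥ x)) := by
  rw [add_mulVec, dotProduct_add, dotProduct_transpose_mulVec, two_mul]

theorem dotProduct_transpose_mul_mul_mulVec (B S : Matrix n n R) (x y : n → R) :
    x ⬝ᵥ ((Bᵀ * S * B) *ᵥ y) = (B *ᵥ x) ⬝ᵥ (S *ᵥ (B *ᵥ y)) := by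
  rw [← mulVec_mulVec, ← mulVec_mulVec, dotProduct_transpose_mulVec, dotProduct_comm]

variable [DecidableEq n]

theorem dotProduct_inv_mulVec_self_of_eq_add_transpose {A Q : Matrix n n R}
    (hAQ : A = Q + Qᵀ) (hA : IsUnit A.det) (x : n → R) :
    x ⬝ᵥ (A⁻¹ *ᵥ x) = 2 * (x ⬝ᵥ ((A⁻¹ * Q * A⁻¹) *ᵥ x)) := by
  have hsymm : A⁻¹ᵀ = A⁻¹ := by
    rw [transpose_nonsing_inv, hAQ, transpose_add, transpose_transpose, add_comm]
  have hsplit : A⁻¹ = A⁻¹ * Q * A⁻¹ + (A⁻¹ * Q * A⁻¹)ᵀ := by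
    calc
      A⁻¹ = A⁻¹ * (Q + Qᵀ) * A⁻¹ := by rw [← hAQ, nonsing_inv_mul A hA, one_mul]
      _ = A⁻¹ * Q * A⁻¹ + (A⁻¹ * Q * A⁻¹)ᵀ := by
        simp only [transpose_mul, hsymm, mul_add, add_mul, mul_assoc]
  rw [← dotProduct_add_transpose_mulVec_self, ← hsplit]

theorem mem_range_diagonal_mulVecLin {d x : n → R} :
    x ∈ LinearMap.range (diagonal d).mulVecLin ↔ ∀ i, d i ∣ x i := by
  simp only [LinearMap.mem_range, mulVecLin_apply, funext_iff, mulVec_diagonal, dvd_def,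
    eq_comm (b := x _), Classical.skolem]

theorem map_range_mulVecLin_of_mul_eq {A D : Matrix n n R} {B T : (Matrix n n R)ˣ}
    (h : (B : Matrix n n R) * D = A * T) :
    (LinearMap.range D.mulVecLin).map (toLin'OfInv B.inv_mul B.mul_inv : (n → R) →ₗ[R] n → R) =
      LinearMap.range A.mulVecLin := by
  have hT : LinearMap.range (T : Matrix n n R).mulVecLin = ⊤ :=
    LinearMap.range_eq_top.2 (mulVec_surjective_iff_isUnit.2 T.isUnit)
  calc
    (LinearMap.range D.mulVecLin).map _ =
        LinearMap.range ((B : Matrix n n R) * D).mulVecLin := by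
      rw [mulVecLin_mul, LinearMap.range_comp]; rfl
    _ = LinearMap.range A.mulVecLin := by
      rw [h, mulVecLin_mul, LinearMap.range_comp_of_range_eq_top _ hT]

end LinearAlgebra

section BoundaryForms

variable {h : ℕ}

theorem intCast_addCircle_one {R : Type*} [Ring R] (m : ℤ) :
    ((m : R) : AddCircle (1 : R)) = 0 :=
  (AddCircle.coe_eq_zero_iff _).2 ⟨m, by simp⟩

theorem ratVec_add (x y : Fin h → ℤ) : ratVec (x + y) = ratVec x + ratVec y := by
  ext i
  simp [ratVec]

theorem ratVec_mulVec (M : Matrix (Fin h) (Fin h) ℤ) (x : Fin h → ℤ) :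
    ratVec (M *ᵥ x) = M.map Int.cast *ᵥ ratVec x :=
  funext (RingHom.map_mulVec (Int.castRingHom ℚ) M x)

theorem ratVec_dotProduct (x y : Fin h → ℤ) :
    ratVec x ⬝ᵥ ratVec y = ((x ⬝ᵥ y : ℤ) : ℚ) :=
  (RingHom.map_dotProduct (Int.castRingHom ℚ) x y).symm

theorem AmatQ_eq_add_transpose (h : ℕ) : AmatQ h = QmatQ h + (QmatQ h)ᵀ := by
  ext i j
  simp [AmatQ, QmatQ, Amat]

theorem AmatQ_transpose (h : ℕ) : (AmatQ h)ᵀ = AmatQ h := by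
  rw [AmatQ_eq_add_transpose, transpose_add, transpose_transpose, add_comm]

theorem AmatQ_zero_zero (n : ℕ) : AmatQ (n + 1) 0 0 = 8 := by
  norm_num [AmatQ, Amat, Qmat]

theorem AmatQ_zero_succ (n : ℕ) (j : Fin n) : AmatQ (n + 1) 0 j.succ = 4 := by
  simp [AmatQ, Amat, Qmat]

theorem AmatQ_succ_zero (n : ℕ) (i : Fin n) : AmatQ (n + 1) i.succ 0 = 4 := by
  simp [AmatQ, Amat, Qmat]

theorem AmatQ_succ_succ (n : ℕ) (i j : Fin n) :
    AmatQ (n + 1) i.succ j.succ = 2 + if i = j then 2 else 0 := by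
  rcases lt_trichotomy i j with h | rfl | h
  · simp [AmatQ, Amat, Qmat, h.le, h.ne, h.not_ge]
  · norm_num [AmatQ, Amat, Qmat]
  · simp [AmatQ, Amat, Qmat, h.le, h.ne', h.not_ge]

/-- The inverse of `A_{n+1}` over `ℚ`. -/
def AmatInv (n : ℕ) : Matrix (Fin (n + 1)) (Fin (n + 1)) ℚ :=
  of fun i j => if i = 0 then (if j = 0 then (n + 1) / 8 else -1 / 4)
    else if j = 0 then -1 / 4 else if i = j then 1 / 2 else 0

theorem AmatQ_mul_AmatInv (n : ℕ) : AmatQ (n + 1) * AmatInv n = 1 := by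
  ext i j
  rw [mul_apply, Fin.sum_univ_succ]
  cases i using Fin.cases <;> cases j using Fin.cases
  all_goals
    simp only [AmatQ_zero_zero, AmatQ_zero_succ, AmatQ_succ_zero, AmatQ_succ_succ, AmatInv,
      of_apply, ↓reduceIte, Fin.succ_ne_zero, (Fin.succ_ne_zero _).symm, Fin.succ_inj, one_apply,
      add_mul, mul_ite, ite_mul, mul_zero, zero_mul, Finset.sum_add_distrib, Finset.sum_const,
      Finset.sum_ite_eq, Finset.sum_ite_eq', Finset.mem_univ, Finset.card_univ, Fintype.card_fin,
      nsmul_eq_mul]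
    ring_nf

theorem inv_AmatQ_succ (n : ℕ) : (AmatQ (n + 1))⁻¹ = AmatInv n :=
  inv_eq_right_inv (AmatQ_mul_AmatInv n)

theorem isUnit_det_AmatQ : ∀ h : ℕ, IsUnit (AmatQ h).det
  | 0 => by simp
  | n + 1 => isUnit_det_of_right_inverse (AmatQ_mul_AmatInv n)

theorem dotProduct_inv_AmatQ_mulVec_comm (v w : Fin h → ℚ) :
    v ⬝ᵥ ((AmatQ h)⁻¹ *ᵥ w) = w ⬝ᵥ ((AmatQ h)⁻¹ *ᵥ v) := by
  rw [← dotProduct_transpose_mulVec, transpose_nonsing_inv, AmatQ_transpose]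

theorem linkR_comm (x y : Fin h → ℤ) : linkR h x y = linkR h y x := by
  rw [linkR, dotProduct_inv_AmatQ_mulVec_comm, linkR]

theorem linkR_add_right (x y z : Fin h → ℤ) :
    linkR h x (y + z) = linkR h x y + linkR h x z := by
  rw [linkR, ratVec_add, mulVec_add, dotProduct_add, AddCircle.coe_add, linkR, linkR]

theorem linkR_Amat_mulVec (x z : Fin h → ℤ) : linkR h x (Amat h *ᵥ z) = 0 := by
  rw [linkR, ratVec_mulVec, ← AmatQ, mulVec_mulVec, nonsing_inv_mul _ (isUnit_det_AmatQ h),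
    one_mulVec, ratVec_dotProduct, intCast_addCircle_one]

theorem quadR_eq_half (x : Fin h → ℤ) :
    quadR h x = ((ratVec x ⬝ᵥ ((AmatQ h)⁻¹ *ᵥ ratVec x) / 2 : ℚ) : AddCircle (1 : ℚ)) := by
  rw [dotProduct_inv_mulVec_self_of_eq_add_transpose (AmatQ_eq_add_transpose h)
    (isUnit_det_AmatQ h), mul_div_cancel_left₀ _ two_ne_zero, quadR]

theorem quadR_add (x y : Fin h → ℤ) :
    quadR h (x + y) = quadR h x + quadR h y + linkR h x y := by
  simp only [quadR_eq_half, linkR, ← AddCircle.coe_add, ratVec_add, mulVec_add, dotProduct_add,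
    add_dotProduct, dotProduct_inv_AmatQ_mulVec_comm (ratVec y) (ratVec x)]
  congr 1
  ring

theorem quadR_Amat_mulVec (z : Fin h → ℤ) : quadR h (Amat h *ᵥ z) = 0 := by
  have heven : ratVec (Amat h *ᵥ z) ⬝ᵥ ratVec z = 2 * ((z ⬝ᵥ (Qmat h *ᵥ z) : ℤ) : ℚ) := by
    rw [ratVec_dotProduct, dotProduct_comm, Amat, dotProduct_add_transpose_mulVec_self]
    push_cast
    rfl
  rw [quadR_eq_half, ratVec_mulVec _ z, ← AmatQ, mulVec_mulVec,
    nonsing_inv_mul _ (isUnit_det_AmatQ h), one_mulVec, AmatQ, ← ratVec_mulVec, heven,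
    mul_div_cancel_left₀ _ two_ne_zero, intCast_addCircle_one]

theorem exists_eq_add_Amat_mulVec_of_ckMk_eq {x x' : Fin h → ℤ} (hx : ckMk x' = ckMk x) :
    ∃ z, x' = x + Amat h *ᵥ z := by
  obtain ⟨z, hz⟩ := (Submodule.Quotient.eq _).1 hx
  exact ⟨z, by rw [← mulVecLin_apply, hz, add_sub_cancel]⟩

theorem linkR_congr {x x' y y' : Fin h → ℤ} (hx : ckMk x' = ckMk x) (hy : ckMk y' = ckMk y) :
    linkR h x' y' = linkR h x y := by
  obtain ⟨z, rfl⟩ := exists_eq_add_Amat_mulVec_of_ckMk_eq hx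
  obtain ⟨w, rfl⟩ := exists_eq_add_Amat_mulVec_of_ckMk_eq hy
  rw [linkR_add_right, linkR_Amat_mulVec, add_zero, linkR_comm, linkR_add_right,
    linkR_Amat_mulVec, add_zero, linkR_comm]

theorem quadR_congr {x x' : Fin h → ℤ} (hx : ckMk x' = ckMk x) : quadR h x' = quadR h x := by
  obtain ⟨z, rfl⟩ := exists_eq_add_Amat_mulVec_of_ckMk_eq hx
  rw [quadR_add, quadR_Amat_mulVec, linkR_Amat_mulVec, add_zero, add_zero]

theorem linkR_mulVec_of_gram_eq {B K : Matrix (Fin h) (Fin h) ℤ} {N : Matrix (Fin h) (Fin h) ℚ}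
    (hN : (B.map Int.cast)ᵀ * (AmatQ h)⁻¹ * B.map Int.cast = N + K.map Int.cast)
    (x y : Fin h → ℤ) :
    linkR h (B *ᵥ x) (B *ᵥ y) = ((ratVec x ⬝ᵥ (N *ᵥ ratVec y) : ℚ) : AddCircle (1 : ℚ)) := by
  rw [linkR, ratVec_mulVec, ratVec_mulVec, ← dotProduct_transpose_mul_mul_mulVec, hN, add_mulVec,
    dotProduct_add, ← ratVec_mulVec, ratVec_dotProduct, AddCircle.coe_add, intCast_addCircle_one,
    add_zero]

theorem quadR_mulVec_of_gram_eq {B W : Matrix (Fin h) (Fin h) ℤ} {N : Matrix (Fin h) (Fin h) ℚ}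
    (hN : (B.map Int.cast)ᵀ * (AmatQ h)⁻¹ * B.map Int.cast = N + (W + Wᵀ).map Int.cast)
    (x : Fin h → ℤ) :
    quadR h (B *ᵥ x) = ((ratVec x ⬝ᵥ (N *ᵥ ratVec x) / 2 : ℚ) : AddCircle (1 : ℚ)) := by
  rw [quadR_eq_half, ratVec_mulVec, ← dotProduct_transpose_mul_mul_mulVec, hN, add_mulVec,
    dotProduct_add, ← ratVec_mulVec, ratVec_dotProduct, dotProduct_add_transpose_mulVec_self,
    Int.cast_mul, Int.cast_ofNat, add_div, mul_div_cancel_left₀ _ two_ne_zero, AddCircle.coe_add,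
    intCast_addCircle_one, add_zero]

end BoundaryForms

section RankFive

/-- The moduli of the cyclic summands of `ℤ/8 ⊕ (ℤ/2)⁴`. -/
def moduli : Fin 5 → ℤ := ![8, 2, 2, 2, 2]

/-- Reduction of integer lifts to `ℤ/8 ⊕ (ℤ/2)⁴`. -/
def reduction : (Fin 5 → ℤ) →ₗ[ℤ] ZMod 8 × ZMod 2 × ZMod 2 × ZMod 2 × ZMod 2 :=
  AddMonoidHom.toIntLinearMap
    { toFun x := (x 0, x 1, x 2, x 3, x 4)
      map_zero' := by simp
      map_add' x y := by simp }

theorem reduction_apply (x : Fin 5 → ℤ) :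
    reduction x =
      ((x 0 : ZMod 8), (x 1 : ZMod 2), (x 2 : ZMod 2), (x 3 : ZMod 2), (x 4 : ZMod 2)) :=
  rfl

theorem reduction_surjective : Function.Surjective reduction := by
  rintro ⟨a₀, a₁, a₂, a₃, a₄⟩
  refine ⟨![a₀.cast, a₁.cast, a₂.cast, a₃.cast, a₄.cast], ?_⟩
  simp [reduction_apply]

theorem ker_reduction : LinearMap.ker reduction = LinearMap.range (diagonal moduli).mulVecLin := by
  ext x
  rw [LinearMap.mem_ker, mem_range_diagonal_mulVecLin, reduction_apply]
  simp [Fin.forall_fin_succ, moduli, ZMod.intCast_zmod_eq_zero_iff_dvd]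

/-- The matrix `B` whose columns are lifts of the generators of the summands of
`ℤ⁵/A₅ℤ⁵ ≃ ℤ/8 ⊕ (ℤ/2)⁴`, with its inverse. -/
def generators : (Matrix (Fin 5) (Fin 5) ℤ)ˣ where
  val := !![1, 2, 2, 0, 0; 0, 0, 0, 1, 0; 0, 0, 0, -1, -1; 0, 1, 0, 0, -1; 0, 0, -1, 0, 0]
  inv := !![1, 2, 2, -2, 2; 0, -1, -1, 1, 0; 0, 0, 0, 0, -1; 0, 1, 0, 0, 0; 0, -1, -1, 0, 0]
  val_inv := by decide
  inv_val := by decide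

/-- The matrix `T = A₅⁻¹ B D` expressing the relations `D` among the generators in terms of the
columns of `A₅`, with its inverse. -/
def relations : (Matrix (Fin 5) (Fin 5) ℤ)ˣ where
  val := !![5, 2, 3, 0, 1; -2, -1, -1, 1, 0; -2, -1, -1, -1, -1; -2, 0, -1, 0, -1;
    -2, -1, -2, 0, 0]
  inv := !![3, 2, 2, 1, 2; -2, -2, -2, 0, -1; -2, -1, -1, -1, -2; 2, 2, 1, 1, 1;
    -4, -3, -3, -2, -2]
  val_inv := by decide
  inv_val := by decide

theorem generators_mul_diagonal_moduli :
    (generators : Matrix (Fin 5) (Fin 5) ℤ) * diagonal moduli = Amat 5 * relations := by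
  decide

/-- The isomorphism `ℤ/8 ⊕ (ℤ/2)⁴ ≃ ℤ⁵/A₅ℤ⁵` sending the class of `x` to that of `B x`. -/
def cokerEquiv : (ZMod 8 × ZMod 2 × ZMod 2 × ZMod 2 × ZMod 2) ≃ₗ[ℤ] Coker 5 :=
  (reduction.quotKerEquivOfSurjective reduction_surjective).symm ≪≫ₗ
    Submodule.Quotient.equiv _ _ (toLin'OfInv generators.inv_mul generators.mul_inv)
      (by rw [ker_reduction, map_range_mulVecLin_of_mul_eq generators_mul_diagonal_moduli])

theorem cokerEquiv_reduction (x : Fin 5 → ℤ) :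
    cokerEquiv (reduction x) = ckMk ((generators : Matrix (Fin 5) (Fin 5) ℤ) *ᵥ x) := by
  rw [cokerEquiv, LinearEquiv.trans_apply, LinearMap.quotKerEquivOfSurjective_symm_apply]
  rfl

/-- The Gram matrix `N` of the target forms: `xᵀNy` represents the linking form and `½ xᵀNx` the
quadratic form. The last two diagonal entries vanish modulo `ℤ` but not modulo `2ℤ`, so only the
quadratic form sees them. -/
def targetGram : Matrix (Fin 5) (Fin 5) ℚ :=
  !![5/8, 0, 1/2, 0, 1/2; 0, 0, 1/2, 0, 1/2; 1/2, 1/2, 0, 0, 0; 0, 0, 0, 1, 1/2;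
    1/2, 1/2, 0, 1/2, 1]

/-- An integer matrix `W` such that `W + Wᵀ = Bᵀ A₅⁻¹ B - N`. -/
def gramDefect : Matrix (Fin 5) (Fin 5) ℤ :=
  !![0, 1, 1, 0, 0; 0, 1, 2, 0, 0; 0, 0, 2, 0, 1; 0, 0, 0, 0, 0; 0, 0, 0, 0, 0]

theorem inv_AmatQ_five :
    (AmatQ 5)⁻¹ = !![5/8, -1/4, -1/4, -1/4, -1/4; -1/4, 1/2, 0, 0, 0; -1/4, 0, 1/2, 0, 0;
      -1/4, 0, 0, 1/2, 0; -1/4, 0, 0, 0, 1/2] := by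
  rw [inv_AmatQ_succ]
  ext i j
  fin_cases i <;> fin_cases j <;> norm_num [AmatInv]

theorem generators_gram :
    ((generators : Matrix (Fin 5) (Fin 5) ℤ).map Int.cast)ᵀ * (AmatQ 5)⁻¹ *
        (generators : Matrix (Fin 5) (Fin 5) ℤ).map Int.cast =
      targetGram + (gramDefect + gramDefectᵀ).map Int.cast := by
  rw [inv_AmatQ_five]
  ext i j
  fin_cases i <;> fin_cases j <;>
    simp [mul_apply, Fin.sum_univ_five, generators, targetGram, gramDefect] <;> norm_num

theorem targetGram_bilin (x y : Fin 5 → ℤ) :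
    ratVec x ⬝ᵥ (targetGram *ᵥ ratVec y) =
      5 * (x 0 : ℚ) * y 0 / 8 + (x 0 * y 2 + x 2 * y 0 + x 0 * y 4 + x 4 * y 0 + x 1 * y 2 +
        x 2 * y 1 + x 1 * y 4 + x 4 * y 1 + x 3 * y 4 + x 4 * y 3) / 2 +
        ((x 3 * y 3 + x 4 * y 4 : ℤ) : ℚ) := by
  simp only [targetGram, ratVec, mulVec, dotProduct, Fin.sum_univ_five, of_apply, cons_val]
  push_cast
  ring

end RankFive

/-- For h = 5 there is a group isomorphism u : ℤ/8 ⊕ (ℤ/2)⁴ → ℤ⁵/A₅ℤ⁵ identifying the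
boundary linking form with 5x₁y₁/8 + (x₁y₃+x₃y₁+x₁y₅+x₅y₁+x₂y₃+x₃y₂+x₂y₅+x₅y₂+x₄y₅+x₅y₄)/2
mod ℤ and the boundary quadratic form with 5x₁²/16 + (x₄²+x₅²+x₁x₃+x₁x₅+x₂x₃+x₂x₅+x₄x₅)/2
mod ℤ, computed from integer lifts x, y of the arguments. -/
theorem boundary_forms_h5 :
    ∃ u : (ZMod 8 × ZMod 2 × ZMod 2 × ZMod 2 × ZMod 2) ≃+ Coker 5,
      ∀ x y x' y' : Fin 5 → ℤ,
        ckMk x' = u ((x 0 : ZMod 8), (x 1 : ZMod 2), (x 2 : ZMod 2), (x 3 : ZMod 2),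
          (x 4 : ZMod 2)) →
        ckMk y' = u ((y 0 : ZMod 8), (y 1 : ZMod 2), (y 2 : ZMod 2), (y 3 : ZMod 2),
          (y 4 : ZMod 2)) →
        linkR 5 x' y' =
          ((5 * (x 0 : ℚ) * (y 0 : ℚ) / 8 +
            ((x 0 : ℚ) * (y 2 : ℚ) + (x 2 : ℚ) * (y 0 : ℚ) + (x 0 : ℚ) * (y 4 : ℚ) +
              (x 4 : ℚ) * (y 0 : ℚ) + (x 1 : ℚ) * (y 2 : ℚ) + (x 2 : ℚ) * (y 1 : ℚ) +
              (x 1 : ℚ) * (y 4 : ℚ) + (x 4 : ℚ) * (y 1 : ℚ) + (x 3 : ℚ) * (y 4 : ℚ) +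
              (x 4 : ℚ) * (y 3 : ℚ)) / 2 : ℚ) : AddCircle (1 : ℚ)) ∧
        quadR 5 x' =
          ((5 * (x 0 : ℚ) ^ 2 / 16 +
            ((x 3 : ℚ) ^ 2 + (x 4 : ℚ) ^ 2 + (x 0 : ℚ) * (x 2 : ℚ) + (x 0 : ℚ) * (x 4 : ℚ) +
              (x 1 : ℚ) * (x 2 : ℚ) + (x 1 : ℚ) * (x 4 : ℚ) + (x 3 : ℚ) * (x 4 : ℚ)) / 2 : ℚ) :
            AddCircle (1 : ℚ)) := by
  refine ⟨cokerEquiv.toAddEquiv, fun x y x' y' hx hy => ?_⟩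
  replace hx := hx.trans (cokerEquiv_reduction x)
  replace hy := hy.trans (cokerEquiv_reduction y)
  constructor
  · rw [linkR_congr hx hy, linkR_mulVec_of_gram_eq generators_gram, targetGram_bilin,
      AddCircle.coe_add, intCast_addCircle_one, add_zero]
  · rw [quadR_congr hx, quadR_mulVec_of_gram_eq generators_gram, targetGram_bilin]
    congr 1
    push_cast
    ring
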